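/- Let ν be a Borel probability measure on [0,∞) with finite first moment, and let (A_l^ν)_{l≥0} be the recursively defined barycenter sets. Then the closure in [0,∞) of the union ∪_{l≥0} (A_l^ν ∩ [0,∞)) contains the support of ν. -/

import Mathlib

open MeasureTheory Set Filter

/-- Barycenter of `ν` over the interval `[a, b) ⊂ [0,∞]` (endpoints in `EReal`),
with the convention that it equals the left endpoint `a` when the interval is null. -/
noncomputable def ebary (ν : Measure ℝ) (a b : EReal) : EReal :=
  if ν {x : ℝ | a ≤ (x : EReal) ∧ (x : EReal) < b} = 0 then a
  else (((∫ r in {x : ℝ | a ≤ (x : EReal) ∧ (x : EReal) < b}, r ∂ν) /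
      (ν {x : ℝ | a ≤ (x : EReal) ∧ (x : EReal) < b}).toReal : ℝ) : EReal)

/-- The sorted points `0 = a₁ ≤ a₂ ≤ ⋯ ≤ a_{2^l+1} = +∞` of the recursively defined
set `A_l^ν`: `pts ν l i` is `a_{i+1}` for `i = 0, …, 2^l`.  At each stage the barycenter
of each interval `[aᵢ, aᵢ₊₁)` is inserted between its endpoints. -/
noncomputable def pts (ν : Measure ℝ) : ℕ → ℕ → EReal
  | 0, 0 => 0
  | 0, _ + 1 => ⊤
  | l + 1, i =>
      if i % 2 = 0 then pts ν l (i / 2)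
      else ebary ν (pts ν l (i / 2)) (pts ν l (i / 2 + 1))

/-- The union `⋃_{l ≥ 0} (A_l^ν ∩ [0,∞))` of the finite parts of the recursively
defined barycenter sets, as a subset of `ℝ`. -/
def barycenterPoints (ν : Measure ℝ) : Set ℝ :=
  {x : ℝ | ∃ l i : ℕ, i ≤ 2 ^ l ∧ pts ν l i = (x : EReal)}

/-- `a` and `b` are consecutive points of some `A_l^ν`. -/
def ConsecutivePts (ν : Measure ℝ) (a b : EReal) : Prop :=
  ∃ l i : ℕ, i + 1 ≤ 2 ^ l ∧ pts ν l i = a ∧ pts ν l (i + 1) = b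

namespace ConsecutivePts

variable {ν : Measure ℝ} {a b : EReal}

theorem zero_top (ν : Measure ℝ) : ConsecutivePts ν 0 ⊤ :=
  ⟨0, 0, by simp, by simp [pts], by simp [pts]⟩

theorem left_ebary (h : ConsecutivePts ν a b) : ConsecutivePts ν a (ebary ν a b) := by
  obtain ⟨l, i, hi, rfl, rfl⟩ := h
  refine ⟨l + 1, 2 * i, by rw [pow_succ]; lia, by simp [pts], ?_⟩
  have h₁ : (2 * i + 1) % 2 = 1 := by lia
  have h₂ : (2 * i + 1) / 2 = i := by lia
  simp [pts, h₁, h₂]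

theorem ebary_right (h : ConsecutivePts ν a b) : ConsecutivePts ν (ebary ν a b) b := by
  obtain ⟨l, i, hi, rfl, rfl⟩ := h
  have h₁ : (2 * i + 1) % 2 = 1 := by lia
  have h₂ : (2 * i + 1) / 2 = i := by lia
  have h₃ : (2 * i + 1 + 1) % 2 = 0 := by lia
  have h₄ : (2 * i + 1 + 1) / 2 = i + 1 := by lia
  exact ⟨l + 1, 2 * i + 1, by rw [pow_succ]; lia, by simp [pts, h₁, h₂], by simp [pts, h₃, h₄]⟩

theorem left_mem {x : ℝ} (h : ConsecutivePts ν x b) : x ∈ barycenterPoints ν := by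
  obtain ⟨l, i, hi, h, -⟩ := h
  exact ⟨l, i, by lia, h⟩

end ConsecutivePts

/-- The barycenter of `[a, b)` is at distance at least `d * ν V` from each finite endpoint
whenever `V ⊆ [a, b)` is non-null and at distance at least `d` from that endpoint. -/
theorem exists_ebary_eq_coe (ν : Measure ℝ) [IsProbabilityMeasure ν]
    (hmom : Integrable (fun r : ℝ => r) ν) {V : Set ℝ} (hV : MeasurableSet V) (hV0 : 0 < ν V)
    {d : ℝ} {a b : EReal} (hVab : ∀ r ∈ V, a ≤ (r : EReal) ∧ (r : EReal) < b) :
    ∃ m : ℝ, ebary ν a b = m ∧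
      (∀ a' : ℝ, a = a' → (∀ r ∈ V, a' + d ≤ r) → a' + d * ν.real V ≤ m) ∧
      (∀ b' : ℝ, b = b' → (∀ r ∈ V, r ≤ b' - d) → m ≤ b' - d * ν.real V) := by
  set S : Set ℝ := {x : ℝ | a ≤ (x : EReal) ∧ (x : EReal) < b}
  have hSm : MeasurableSet S :=
    (measurableSet_le measurable_const measurable_coe_real_ereal).inter
      (measurableSet_lt measurable_coe_real_ereal measurable_const)
  have hVS : V ⊆ S := hVab
  have hS0 : ν S ≠ 0 := (hV0.trans_le (measure_mono hVS)).ne'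
  have hSpos : 0 < ν.real S := ENNReal.toReal_pos hS0 (measure_ne_top _ _)
  have hS1 : ν.real S ≤ 1 := measureReal_le_one
  -- A nonnegative function bounded below by `d` on `V` has average at least `d * ν V` over `S`.
  have key : ∀ f : ℝ → ℝ, Integrable f ν → (∀ r ∈ S, 0 ≤ f r) → (∀ r ∈ V, d ≤ f r) →
      d * ν.real V ≤ (∫ r in S, f r ∂ν) / ν.real S := by
    intro f hf hf0 hfd
    have h0 : 0 ≤ ∫ r in S, f r ∂ν := setIntegral_nonneg hSm hf0
    calc d * ν.real V = ∫ _ in V, d ∂ν := by simp [mul_comm]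
      _ ≤ ∫ r in V, f r ∂ν :=
        setIntegral_mono_on (integrable_const d).integrableOn hf.integrableOn hV hfd
      _ ≤ ∫ r in S, f r ∂ν :=
        setIntegral_mono_set hf.integrableOn
          ((ae_restrict_iff' hSm).2 (Eventually.of_forall hf0)) hVS.eventuallyLE
      _ ≤ (∫ r in S, f r ∂ν) / ν.real S := by
        rw [le_div_iff₀ hSpos]
        exact mul_le_of_le_one_right h0 hS1
  refine ⟨(∫ r in S, r ∂ν) / ν.real S, by rw [ebary, if_neg hS0]; rfl, ?_, ?_⟩
  · rintro a' rfl hd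
    have := key (fun r => r - a') (hmom.sub (integrable_const a'))
      (fun r hr => sub_nonneg.2 (EReal.coe_le_coe_iff.1 hr.1)) (fun r hr => by linarith [hd r hr])
    rw [integral_sub hmom.integrableOn (integrable_const a').integrableOn, sub_div] at this
    simp only [integral_const, measureReal_restrict_apply_univ, smul_eq_mul] at this
    rw [mul_div_cancel_left₀ _ hSpos.ne'] at this
    linarith
  · rintro b' rfl hd
    have := key (fun r => b' - r) ((integrable_const b').sub hmom)
      (fun r hr => sub_nonneg.2 (EReal.coe_lt_coe_iff.1 hr.2).le)
      (fun r hr => by linarith [hd r hr])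
    rw [integral_sub (integrable_const b').integrableOn hmom.integrableOn, sub_div] at this
    simp only [integral_const, measureReal_restrict_apply_univ, smul_eq_mul] at this
    rw [mul_div_cancel_left₀ _ hSpos.ne'] at this
    linarith

/-- The closure of `⋃_l (A_l^ν ∩ [0,∞))` contains the support of `ν`:
every point all of whose open neighbourhoods have positive `ν`-measure lies in the
closure of the barycenter points. -/
theorem support_subset_closure_barycenterPoints (ν : Measure ℝ) [IsProbabilityMeasure ν]
    (hsupp : ν (Set.Iio 0) = 0)
    (hmom : Integrable (fun r : ℝ => r) ν) :
    {x : ℝ | ∀ U : Set ℝ, IsOpen U → x ∈ U → 0 < ν U} ⊆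
      closure (barycenterPoints ν) := by
  intro x hx
  by_contra hcl
  rw [Metric.mem_closure_iff] at hcl
  push Not at hcl
  obtain ⟨ε, hε, hgap⟩ := hcl
  have hside : ∀ m ∈ barycenterPoints ν, m ≤ x - ε ∨ x + ε ≤ m := by
    intro m hm
    have := hgap m hm
    rw [Real.dist_eq, le_abs] at this
    rcases this with h | h
    · left; linarith
    · right; linarith
  have hx0 : 0 ≤ x := by
    by_contra! h
    exact (hx _ isOpen_Iio h).ne' hsupp
  set V : Set ℝ := Ioo (x - ε / 2) (x + ε / 2)
  have hV0 : 0 < ν V := hx _ isOpen_Ioo ⟨by linarith, by linarith⟩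
  set c : ℝ := ε / 2 * ν.real V
  have hcpos : 0 < c := mul_pos (by linarith) (ENNReal.toReal_pos hV0.ne' (measure_ne_top _ _))
  have step : ∀ (a : ℝ) (b : EReal), a ≤ x - ε → ((x + ε : ℝ) : EReal) ≤ b →
      ConsecutivePts ν a b → ∃ m : ℝ, ConsecutivePts ν a m ∧ ConsecutivePts ν m b ∧
        (m ≤ x - ε ∨ x + ε ≤ m) ∧ a + c ≤ m ∧ ∀ b' : ℝ, b = b' → m ≤ b' - c := by
    intro a b ha hb hab
    obtain ⟨m, hm, h₁, h₂⟩ := exists_ebary_eq_coe ν hmom measurableSet_Ioo hV0 (d := ε / 2)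
      (a := a) (b := b) fun r hr => ⟨EReal.coe_le_coe_iff.2 (by linarith [hr.1]),
        (EReal.coe_lt_coe_iff.2 (by linarith [hr.2])).trans_le hb⟩
    have hl := hab.left_ebary
    have hr := hab.ebary_right
    rw [hm] at hl hr
    refine ⟨m, hl, hr, hside m hr.left_mem, h₁ a rfl fun r hr => by linarith [hr.1], ?_⟩
    rintro b' rfl
    have hb' := EReal.coe_le_coe_iff.1 hb
    exact h₂ b' rfl fun r hr => by linarith [hr.2]
  have no_bounded : ∀ (n : ℕ) (a b : ℝ), a ≤ x - ε → x + ε ≤ b → b - a ≤ n * c →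
      ¬ ConsecutivePts ν a b := by
    intro n
    induction n with
    | zero => intro a b ha hb hn; norm_num at hn; linarith
    | succ n ih =>
      intro a b ha hb hn hab
      push_cast at hn
      obtain ⟨m, hl, hr, hm, h₁, h₂⟩ := step a b ha (EReal.coe_le_coe_iff.2 hb) hab
      have h₂ := h₂ b rfl
      rcases hm with hm | hm
      · exact ih m b hm hb (by linarith) hr
      · exact ih a m ha hm (by linarith) hl
  have no_unbounded : ∀ (n : ℕ) (a : ℝ), a ≤ x - ε → x - a ≤ n * c →
      ¬ ConsecutivePts ν a ⊤ := by
    intro n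
    induction n with
    | zero => intro a ha hn; norm_num at hn; linarith
    | succ n ih =>
      intro a ha hn hab
      push_cast at hn
      obtain ⟨m, hl, hr, hm, h₁, -⟩ := step a ⊤ ha le_top hab
      rcases hm with hm | hm
      · exact ih m hm (by linarith) hr
      · obtain ⟨k, hk⟩ := exists_nat_ge ((m - a) / c)
        exact no_bounded k a m ha hm ((div_le_iff₀ hcpos).1 hk) hl
  have h0 : ConsecutivePts ν ((0 : ℝ) : EReal) ⊤ := ConsecutivePts.zero_top ν
  have h0x : (0 : ℝ) ≤ x - ε := (hside 0 h0.left_mem).resolve_right (by linarith)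
  obtain ⟨k, hk⟩ := exists_nat_ge ((x - 0) / c)
  exact no_unbounded k 0 h0x ((div_le_iff₀ hcpos).1 hk) h0
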